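/- Let V be a finite type with decidable equality and let G be a simple graph on V with decidable adjacency. Then, as an identity in ℤ[x], det(L_G + x·Id) = Σ over all rooted spanning forests (F,S) of G of x^{|S|}, where L_G is the graph Laplacian of G (the matrix D − A with D the diagonal matrix of vertex degrees and A the adjacency matrix, with integer entries). -/

import Mathlib

open Finset

/-! The proof expands the determinant along *parent maps*. Row `v` of `L_G + diag x` is the sum of
`e_v - e_u` over the neighbours `u` of `v`, plus `x v • e_v`. By multilinearity the determinant
is a sum over the maps `f : V → V` choosing one summand in each row: a neighbour `f v = u`, or
`f v = v` for the last summand. If every orbit of `f` reaches a fixed point, ordering the vertices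
by their distance to it makes the chosen matrix unitriangular; otherwise the indicator vector of
the orbits without fixed points lies in its kernel. The surviving maps are the parent maps of
rooted forests, whose roots are the fixed points. -/

open Function Matrix SimpleGraph

section RootedForests

variable {V R : Type*}

/-- A map sending each vertex of a rooted forest to its parent, a root being its own parent.
Forest-likeness is encoded by requiring every orbit to reach a fixed point. -/
def IsParentMap (f : V → V) : Prop := ∀ v, ∃ n, IsFixedPt f (f^[n] v)

lemma isParentMap_iff_exists_rank {f : V → V} :
    IsParentMap f ↔ ∃ rank : V → ℕ, ∀ v, f v ≠ v → rank (f v) < rank v := by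
  classical
  constructor
  · intro hf
    refine ⟨fun v => Nat.find (hf v), fun v hv => ?_⟩
    change Nat.find (hf (f v)) < Nat.find (hf v)
    have hfix := Nat.find_spec (hf v)
    rcases hn : Nat.find (hf v) with - | n
    · rw [hn] at hfix
      exact absurd hfix hv
    · rw [hn, iterate_succ_apply] at hfix
      exact Nat.lt_succ_of_le (Nat.find_min' (hf (f v)) hfix)
  · rintro ⟨rank, hrank⟩ v
    induction v using (measure rank).wf.induction with
    | _ v ih =>
      by_cases hv : f v = v
      · exact ⟨0, hv⟩
      · obtain ⟨n, hn⟩ := ih (f v) (hrank v hv)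
        exact ⟨n + 1, hn⟩

section ParentMatrix

variable [DecidableEq V] [Ring R]

variable (R) in
/-- The row of a vertex `v` with parent `u` in the parent matrix of a rooted forest; `u = v` encodes
that `v` is a root. -/
def parentRow (v u : V) : V → R :=
  if u = v then Pi.single v 1 else Pi.single v 1 - Pi.single u 1

variable (R) in
/-- The matrix `1 - N`, where `N` is the adjacency matrix of the directed edges from each
non-fixed vertex `v` to `f v`. -/
def parentMatrix (f : V → V) : Matrix V V R := Matrix.of fun v => parentRow R v (f v)

lemma parentMatrix_apply_self (f : V → V) (v : V) : parentMatrix R f v v = 1 := by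
  by_cases hv : f v = v
  · simp [parentMatrix, parentRow, hv]
  · simp [parentMatrix, parentRow, hv, Ne.symm hv]

lemma parentMatrix_apply_eq_zero {f : V → V} {v w : V} (hwv : w ≠ v) (hw : w ≠ f v) :
    parentMatrix R f v w = 0 := by
  by_cases hv : f v = v <;> simp [parentMatrix, parentRow, hv, hwv, hw]

lemma parentMatrix_mulVec_apply [Fintype V] (f : V → V) (y : V → R) (v : V) :
    (parentMatrix R f *ᵥ y) v = if f v = v then y v else y v - y (f v) := by
  change parentRow R v (f v) ⬝ᵥ y = _
  unfold parentRow
  split_ifs with hv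
  · exact single_one_dotProduct v y
  · rw [sub_dotProduct, single_one_dotProduct, single_one_dotProduct]

end ParentMatrix

section Determinant

variable [Fintype V] [DecidableEq V] [CommRing R]

lemma det_parentMatrix_of_isParentMap {f : V → V} (hf : IsParentMap f) :
    (parentMatrix R f).det = 1 := by
  obtain ⟨rank, hrank⟩ := isParentMap_iff_exists_rank.1 hf
  have apply_eq_zero {v w : V} (hwv : w ≠ v) (hle : rank v ≤ rank w) :
      parentMatrix R f v w = 0 := by
    refine parentMatrix_apply_eq_zero hwv ?_
    rintro rfl
    exact (hrank v hwv).not_ge hle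
  have triangular : (parentMatrix R f).BlockTriangular (OrderDual.toDual ∘ rank) :=
    fun v w (hlt : rank v < rank w) => apply_eq_zero (by rintro rfl; exact hlt.false) hlt.le
  have block_eq_one (k : ℕᵒᵈ) :
      (parentMatrix R f).toSquareBlock (OrderDual.toDual ∘ rank) k = 1 := by
    ext ⟨v, hv⟩ ⟨w, hw⟩
    by_cases hvw : w = v
    · subst hvw
      simp [toSquareBlock_def, parentMatrix_apply_self]
    · have hrank_eq : rank v = rank w := OrderDual.toDual.injective (hv.trans hw.symm)
      simp [toSquareBlock_def, apply_eq_zero hvw hrank_eq.le, Ne.symm hvw]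
  rw [triangular.det]
  simp [block_eq_one]

lemma det_parentMatrix_of_not_isParentMap {f : V → V} (hf : ¬ IsParentMap f) :
    (parentMatrix R f).det = 0 := by
  classical
  simp only [IsParentMap, not_forall, not_exists] at hf
  obtain ⟨v₀, hv₀⟩ := hf
  set y : V → R := fun v => if ∃ n, IsFixedPt f (f^[n] v) then 0 else 1 with hy
  have reaches_fixed_iff (v : V) :
      (∃ n, IsFixedPt f (f^[n] (f v))) ↔ ∃ n, IsFixedPt f (f^[n] v) := by
    refine ⟨fun ⟨n, hn⟩ => ⟨n + 1, hn⟩, fun ⟨n, hn⟩ => ⟨n, ?_⟩⟩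
    rw [← iterate_succ_apply, iterate_succ_apply', hn]
    exact hn
  have mulVec_eq_zero : parentMatrix R f *ᵥ y = 0 := by
    ext v
    rw [parentMatrix_mulVec_apply]
    split_ifs with hv
    · exact if_pos ⟨0, hv⟩
    · simp only [hy, reaches_fixed_iff, sub_self, Pi.zero_apply]
  have apply_eq_one : y v₀ = 1 := if_neg (not_exists.2 hv₀)
  exact det_eq_zero_of_mulVec_eq_zero_of_mem_nonZeroDivisors mulVec_eq_zero
    (i := v₀) (apply_eq_one ▸ one_mem (nonZeroDivisors R))

open scoped Classical in
lemma det_sum_smul_parentRow (a : Matrix V V R) :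
    det (Matrix.of fun v => ∑ u, a v u • parentRow R v u) =
      ∑ f : V → V with IsParentMap f, ∏ v, a v (f v) := by
  calc det (Matrix.of fun v => ∑ u, a v u • parentRow R v u)
      = ∑ f : V → V, detRowAlternating fun v => a v (f v) • parentRow R v (f v) :=
        detRowAlternating.toMultilinearMap.map_sum fun v u => a v u • parentRow R v u
    _ = ∑ f : V → V, (∏ v, a v (f v)) * det (parentMatrix R f) :=
        sum_congr rfl fun f _ => detRowAlternating.toMultilinearMap.map_smul_univ _ _
    _ = ∑ f : V → V with IsParentMap f, ∏ v, a v (f v) := by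
        rw [sum_filter]
        refine sum_congr rfl fun f _ => ?_
        split_ifs with hf
        · rw [det_parentMatrix_of_isParentMap hf, mul_one]
        · rw [det_parentMatrix_of_not_isParentMap hf, mul_zero]

lemma lapMatrix_add_diagonal_eq_sum_smul_parentRow (G : SimpleGraph V) [DecidableRel G.Adj]
    (x : V → R) :
    G.lapMatrix R + diagonal x =
      Matrix.of fun v => ∑ u, (G.adjMatrix R + diagonal x) v u • parentRow R v u := by
  ext v w
  have adj_term (u : V) : G.adjMatrix R v u * parentRow R v u w =
      G.adjMatrix R v u * (1 : Matrix V V R) v w - G.adjMatrix R v u * (1 : Matrix V V R) u w := by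
    by_cases huv : u = v
    · simp [huv]
    · simp [parentRow, huv, Pi.single_apply, one_apply, eq_comm, mul_sub]
  have diagonal_term (u : V) : diagonal x v u * parentRow R v u w =
      diagonal x v u * (1 : Matrix V V R) u w := by
    by_cases huv : u = v
    · simp [huv, parentRow, Pi.single_apply, one_apply, eq_comm]
    · simp [Ne.symm huv]
  have degree_eq : ∑ u, G.adjMatrix R v u = G.degree v := by
    simp [degree_eq_sum_if_adj, adjMatrix_apply]
  simp only [of_apply, Finset.sum_apply, Pi.smul_apply, smul_eq_mul, Matrix.add_apply, add_mul,
    sum_add_distrib, adj_term, diagonal_term, sum_sub_distrib, ← sum_mul, degree_eq]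
  simp only [← mul_apply, Matrix.mul_one, lapMatrix, degMatrix, Matrix.sub_apply]
  simp [diagonal_apply, one_apply]

end Determinant

/-- The forest of edges joining each vertex to its image under a parent map `f`. -/
def parentGraph (f : V → V) : SimpleGraph V := fromRel fun v u => f v = u

section ParentGraph

variable {f g : V → V} {u v : V} {G H : SimpleGraph V} {S : Set V}

lemma parentGraph_adj : (parentGraph f).Adj u v ↔ u ≠ v ∧ (f u = v ∨ f v = u) := by
  simp [parentGraph]

lemma parentGraph_adj_apply (hv : f v ≠ v) : (parentGraph f).Adj v (f v) :=
  parentGraph_adj.2 ⟨hv.symm, Or.inl rfl⟩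

lemma parentGraph_le_iff : parentGraph f ≤ G ↔ ∀ v, f v ≠ v → G.Adj v (f v) := by
  refine ⟨fun hle v hv => hle (parentGraph_adj_apply hv), fun hadj u v huv => ?_⟩
  obtain ⟨hne, rfl | rfl⟩ := parentGraph_adj.1 huv
  · exact hadj u hne.symm
  · exact (hadj v hne).symm

lemma reachable_parentGraph_iterate (f : V → V) (v : V) (n : ℕ) :
    (parentGraph f).Reachable v (f^[n] v) := by
  induction n with
  | zero => exact .rfl
  | succ n ih =>
    rw [iterate_succ_apply']
    by_cases hfix : f (f^[n] v) = f^[n] v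
    · rwa [hfix]
    · exact ih.trans (parentGraph_adj_apply hfix).reachable

lemma exists_iterate_eq_of_reachable_parentGraph (huv : (parentGraph f).Reachable u v) :
    ∃ m n, f^[m] u = f^[n] v := by
  obtain ⟨p⟩ := huv
  induction p with
  | nil => exact ⟨0, 0, rfl⟩
  | cons hadj _ ih =>
    obtain ⟨m, n, hmn⟩ := ih
    obtain ⟨-, rfl | rfl⟩ := parentGraph_adj.1 hadj
    · exact ⟨m + 1, n, hmn⟩
    · refine ⟨m, n + 1, ?_⟩
      rw [← iterate_succ_apply, iterate_succ_apply', hmn, iterate_succ_apply']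

lemma eq_of_reachable_parentGraph (hu : IsFixedPt f u) (hv : IsFixedPt f v)
    (huv : (parentGraph f).Reachable u v) : u = v := by
  obtain ⟨m, n, hmn⟩ := exists_iterate_eq_of_reachable_parentGraph huv
  rwa [iterate_fixed hu, iterate_fixed hv] at hmn

lemma IsParentMap.exists_reachable_fixedPoint (hf : IsParentMap f) (v : V) :
    ∃ r, IsFixedPt f r ∧ (parentGraph f).Reachable v r :=
  let ⟨n, hn⟩ := hf v
  ⟨f^[n] v, hn, reachable_parentGraph_iterate f v n⟩

lemma IsParentMap.isAcyclic_parentGraph (hf : IsParentMap f) : (parentGraph f).IsAcyclic := by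
  classical
  obtain ⟨rank, hrank⟩ := isParentMap_iff_exists_rank.1 hf
  intro v₀ c hc
  obtain ⟨v, hv, hmax⟩ := exists_max_image c.support.toFinset rank ⟨v₀, by simp⟩
  rw [List.mem_toFinset] at hv
  have hcv := hc.rotate hv
  -- Both neighbours on the cycle of a vertex of maximal rank can only be its parent.
  have eq_parent {u : V} (hu : u ∈ (c.rotate v hv).support) (hvu : (parentGraph f).Adj v u) :
      u = f v := by
    obtain ⟨hne, rfl | rfl⟩ := parentGraph_adj.1 hvu
    · rfl
    · exact absurd (hmax u (by simpa using hu)) (hrank u hne).not_ge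
  apply hcv.snd_ne_penultimate
  rw [eq_parent (by simp) (Walk.adj_snd hcv.not_nil),
    eq_parent (by simp) (Walk.adj_penultimate hcv.not_nil).symm]

lemma IsParentMap.eq_of_parentGraph_eq (hf : IsParentMap f)
    (hgraph : parentGraph f = parentGraph g) (hfixed : fixedPoints f = fixedPoints g) :
    f = g := by
  obtain ⟨rank, hrank⟩ := isParentMap_iff_exists_rank.1 hf
  funext v
  induction v using (measure rank).wf.induction with
  | _ v ih =>
    by_cases hv : f v = v
    · have hgv : v ∈ fixedPoints g := hfixed ▸ hv
      exact hv.trans hgv.symm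
    · have hlt := hrank v hv
      obtain ⟨-, hgv | hgv⟩ := parentGraph_adj.1 (hgraph ▸ parentGraph_adj_apply hv)
      · exact hgv.symm
      · have hffv : f (f v) = v := (ih (f v) hlt).trans hgv
        have hlt' := hrank (f v) (by rw [hffv]; exact Ne.symm hv)
        rw [hffv] at hlt'
        exact absurd hlt' hlt.asymm

/-- `H` is a forest and `S` is a set of roots for it: one vertex in each component of `H`. -/
def IsRootedForest (H : SimpleGraph V) (S : Set V) : Prop :=
  H.IsAcyclic ∧ ∀ c : H.ConnectedComponent, ∃! v, v ∈ S ∧ H.connectedComponentMk v = c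

lemma IsParentMap.isRootedForest (hf : IsParentMap f) :
    IsRootedForest (parentGraph f) (fixedPoints f) := by
  refine ⟨hf.isAcyclic_parentGraph, fun c => ?_⟩
  induction c using ConnectedComponent.ind with
  | h v =>
    obtain ⟨r, hr, hvr⟩ := hf.exists_reachable_fixedPoint v
    refine ⟨r, ⟨hr, ConnectedComponent.sound hvr.symm⟩, fun s ⟨hs, hsv⟩ => ?_⟩
    exact eq_of_reachable_parentGraph hs hr ((ConnectedComponent.exact hsv).trans hvr)

lemma exists_adj_dist_lt (huv : H.Reachable u v) (hne : u ≠ v) :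
    ∃ w, H.Adj u w ∧ H.dist w v < H.dist u v := by
  obtain ⟨p, hp⟩ := huv.exists_walk_length_eq_dist
  cases p with
  | nil => exact absurd rfl hne
  | cons hadj q =>
    refine ⟨_, hadj, ?_⟩
    rw [← hp, Walk.length_cons]
    exact Nat.lt_succ_of_le (dist_le q)

lemma exists_isParentMap_parentGraph_le
    (hS : ∀ c : H.ConnectedComponent, ∃ v ∈ S, H.connectedComponentMk v = c) :
    ∃ f, IsParentMap f ∧ parentGraph f ≤ H ∧ fixedPoints f = S := by
  classical
  choose root root_mem root_component using hS
  let rank v := H.dist v (root (H.connectedComponentMk v))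
  have exists_parent (v : V) (hv : v ∉ S) : ∃ u, H.Adj v u ∧ rank u < rank v := by
    obtain ⟨u, hadj, hlt⟩ := exists_adj_dist_lt
      (ConnectedComponent.exact (root_component (H.connectedComponentMk v)).symm)
      fun heq => hv (heq ▸ root_mem _)
    refine ⟨u, hadj, ?_⟩
    simpa only [rank, ConnectedComponent.sound hadj.symm.reachable] using hlt
  choose! parent parent_adj rank_parent using exists_parent
  let f v := if v ∈ S then v else parent v
  have f_of_mem {v : V} (hv : v ∈ S) : f v = v := if_pos hv
  have f_of_notMem {v : V} (hv : v ∉ S) : f v = parent v := if_neg hv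
  refine ⟨f, isParentMap_iff_exists_rank.2 ⟨rank, fun v hv => ?_⟩,
    parentGraph_le_iff.2 fun v hv => ?_, Set.ext fun v => ⟨fun hv => ?_, f_of_mem⟩⟩
  · have hvS := mt f_of_mem hv
    exact f_of_notMem hvS ▸ rank_parent v hvS
  · have hvS := mt f_of_mem hv
    exact f_of_notMem hvS ▸ parent_adj v hvS
  · by_contra hvS
    exact (parent_adj v hvS).ne ((f_of_notMem hvS).symm.trans hv).symm

lemma IsRootedForest.exists_isParentMap (h : IsRootedForest H S) :
    ∃ f, IsParentMap f ∧ parentGraph f = H ∧ fixedPoints f = S := by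
  obtain ⟨f, hf, hle, rfl⟩ := exists_isParentMap_parentGraph_le fun c => (h.2 c).exists
  refine ⟨f, hf, hle.antisymm ?_, rfl⟩
  have reachable_eq : (parentGraph f).Reachable = H.Reachable := by
    ext u v
    refine ⟨fun huv => huv.mono hle, fun huv => ?_⟩
    obtain ⟨r, hr, hur⟩ := hf.exists_reachable_fixedPoint u
    obtain ⟨s, hs, hvs⟩ := hf.exists_reachable_fixedPoint v
    have hrs : r = s := (h.2 (H.connectedComponentMk v)).unique
      ⟨hr, ConnectedComponent.sound ((hur.mono hle).symm.trans huv)⟩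
      ⟨hs, ConnectedComponent.sound (hvs.mono hle).symm⟩
    exact hur.trans (hrs ▸ hvs.symm)
  have hmax := (maximal_isAcyclic_iff_reachable_eq hle hf.isAcyclic_parentGraph).2 reachable_eq
  exact hmax.2 ⟨le_rfl, h.1⟩ hle

end ParentGraph

section Sums

variable [Fintype V] [DecidableEq V]

lemma map_lapMatrix {S : Type*} [NonAssocRing R] [NonAssocRing S] (G : SimpleGraph V)
    [DecidableRel G.Adj] (φ : R →+* S) : (G.lapMatrix R).map φ = G.lapMatrix S := by
  ext v w
  simp [lapMatrix, degMatrix, adjMatrix_apply, diagonal_apply, apply_ite φ]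

lemma prod_adjMatrix_add_diagonal [CommSemiring R] (G : SimpleGraph V)
    [DecidableRel G.Adj] (x : V → R) (f : V → V) [Decidable (parentGraph f ≤ G)] :
    ∏ v, (G.adjMatrix R + diagonal x) v (f v) =
      if parentGraph f ≤ G then ∏ v with f v = v, x v else 0 := by
  have apply_of_eq {v : V} (hv : f v = v) : (G.adjMatrix R + diagonal x) v (f v) = x v := by
    simp [hv]
  have apply_of_ne {v : V} (hv : f v ≠ v) :
      (G.adjMatrix R + diagonal x) v (f v) = if G.Adj v (f v) then 1 else 0 := by
    simp [hv.symm, adjMatrix_apply]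
  split_ifs with hle
  · rw [prod_filter]
    refine prod_congr rfl fun v _ => ?_
    split_ifs with hv
    · exact apply_of_eq hv
    · rw [apply_of_ne hv, if_pos (parentGraph_le_iff.1 hle v hv)]
  · rw [parentGraph_le_iff] at hle
    push Not at hle
    obtain ⟨v, hv, hadj⟩ := hle
    exact prod_eq_zero (mem_univ v) (by rw [apply_of_ne hv, if_neg hadj])

open scoped Classical in
lemma sum_isParentMap_eq_sum_isRootedForest {M : Type*} [AddCommMonoid M]
    (φ : SimpleGraph V → Finset V → M) :
    ∑ f : V → V with IsParentMap f, φ (parentGraph f) {v | f v = v} =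
      ∑ H : SimpleGraph V, ∑ S : Finset V, if IsRootedForest H S then φ H S else 0 := by
  have coe_fixed (f : V → V) : ((univ.filter fun v => f v = v : Finset V) : Set V) =
      fixedPoints f := by
    ext v
    simp [IsFixedPt]
  rw [← Fintype.sum_prod_type', ← sum_filter]
  refine sum_nbij (fun f => (parentGraph f, univ.filter fun v => f v = v)) (fun f hf => ?_)
    (fun f hf g _ hfg => ?_) (fun ⟨H, S⟩ hHS => ?_) (fun _ _ => rfl)
  · simpa [coe_fixed] using (mem_filter.1 hf).2.isRootedForest
  · obtain ⟨hgraph, hfixed⟩ := Prod.mk.inj hfg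
    refine (mem_filter.1 hf).2.eq_of_parentGraph_eq hgraph ?_
    rw [← coe_fixed, hfixed, coe_fixed]
  · obtain ⟨f, hf, rfl, hS⟩ := (mem_filter.1 hHS).2.exists_isParentMap
    refine ⟨f, mem_filter.2 ⟨mem_univ f, hf⟩, Prod.ext rfl (coe_injective ?_)⟩
    exact (coe_fixed f).trans hS

open scoped Classical in
lemma sum_powerset_edgeFinset {M : Type*} [AddCommMonoid M] (G : SimpleGraph V) [Fintype G.edgeSet]
    (φ : SimpleGraph V → M) :
    ∑ F ∈ G.edgeFinset.powerset, φ (fromEdgeSet (F : Set (Sym2 V))) =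
      ∑ H : SimpleGraph V with H ≤ G, φ H := by
  have coe_subset_edgeSet {F : Finset (Sym2 V)} (hF : F ∈ G.edgeFinset.powerset) :
      (F : Set (Sym2 V)) ⊆ G.edgeSet := by
    simpa [← coe_subset] using hF
  refine sum_nbij' (fun F => fromEdgeSet (F : Set (Sym2 V))) (fun H => H.edgeFinset)
    (fun F hF => ?_) (fun H hH => ?_) (fun F hF => coe_injective ?_) (fun H _ => ?_)
    (fun _ _ => rfl)
  · simpa using Set.sdiff_subset.trans (coe_subset_edgeSet hF)
  · simpa using hH
  · rw [coe_edgeFinset, edgeSet_fromEdgeSet, sdiff_eq_left]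
    exact Set.disjoint_left.2
      ((coe_subset_edgeSet hF).trans G.edgeSet_subset_compl_diagSet)
  · simp

open scoped Classical in
theorem det_graph_lap_add_X_eq_sum_rooted_spanning_forests_general [CommRing R]
    (G : SimpleGraph V) [DecidableRel G.Adj] (x : V → R) :
    det (G.lapMatrix R + diagonal x) =
      ∑ F ∈ G.edgeFinset.powerset,
        ∑ S : Finset V,
          if IsRootedForest (fromEdgeSet (F : Set (Sym2 V))) S then ∏ v ∈ S, x v else 0 := by
  calc det (G.lapMatrix R + diagonal x)
      = ∑ f : V → V with IsParentMap f,
          if parentGraph f ≤ G then ∏ v with f v = v, x v else 0 := by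
        simp only [lapMatrix_add_diagonal_eq_sum_smul_parentRow, det_sum_smul_parentRow,
          prod_adjMatrix_add_diagonal]
    _ = ∑ H : SimpleGraph V, ∑ S : Finset V,
          if IsRootedForest H S then if H ≤ G then ∏ v ∈ S, x v else 0 else 0 :=
        sum_isParentMap_eq_sum_isRootedForest fun H S => if H ≤ G then ∏ v ∈ S, x v else 0
    _ = ∑ H : SimpleGraph V with H ≤ G,
          ∑ S : Finset V, if IsRootedForest H S then ∏ v ∈ S, x v else 0 := by
        rw [sum_filter]
        refine sum_congr rfl fun H _ => ?_
        split_ifs <;> simp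
    _ = _ := (sum_powerset_edgeFinset G _).symm

end Sums

end RootedForests

open scoped Classical in
/-- For a finite simple graph `G`, as an identity in `ℤ[x]`,
`det(L_G + x·Id)` equals the sum of `x^{|S|}` over all rooted spanning forests `(F,S)`
of `G`, i.e. over pairs where `F` is a set of edges of `G` such that the spanning
subgraph with edge set `F` is acyclic, and `S` is a set of vertices containing exactly
one vertex from each connected component of that spanning subgraph. -/
theorem det_graph_lap_add_X_eq_sum_rooted_spanning_forests
    (V : Type*) [Fintype V] [DecidableEq V]
    (G : SimpleGraph V) [DecidableRel G.Adj] :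
    Matrix.det ((G.lapMatrix ℤ).map Polynomial.C +
        (Polynomial.X : Polynomial ℤ) • (1 : Matrix V V (Polynomial ℤ))) =
      ∑ F ∈ G.edgeFinset.powerset, ∑ S ∈ (Finset.univ : Finset V).powerset,
        if ((SimpleGraph.fromEdgeSet (F : Set (Sym2 V))).IsAcyclic ∧
            ∀ c : (SimpleGraph.fromEdgeSet (F : Set (Sym2 V))).ConnectedComponent,
              ∃! v : V, v ∈ S ∧
                (SimpleGraph.fromEdgeSet (F : Set (Sym2 V))).connectedComponentMk v = c)
        then (Polynomial.X : Polynomial ℤ) ^ S.card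
        else 0 := by
  rw [map_lapMatrix, smul_one_eq_diagonal,
    det_graph_lap_add_X_eq_sum_rooted_spanning_forests_general]
  simp only [prod_const, powerset_univ, IsRootedForest, mem_coe]
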